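/- Assume V ∈ C¹(ℝ^N), c ∈ ℝ, condition (V^c) and the coercivity condition (1.7), and let ρ₀ be as defined. Then there exists r̄ ∈ (0, ρ₀/2) such that for every r ∈ (0, r̄) there exist L_r > 0 and ν_r > 0 with the following property: for every q ∈ Γ_c satisfying dist(q(0), 𝒱^c) ≥ ρ₀, ‖q‖_{L^∞(ℝ,ℝ^N)} ≤ R and J_c(q) ≤ m_c + ν_r, one has (i) there is τ ∈ (0, L_r) with dist(q(τ), 𝒱^c₊) ≤ r and dist(q(t), 𝒱^c₊) < ρ₀ for all t ≥ τ, and (ii) there is σ ∈ (−L_r, 0) with dist(q(σ), 𝒱^c₋) ≤ r and dist(q(t), 𝒱^c₋) < ρ₀ for all t ≤ σ. -/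

import Mathlib

open MeasureTheory Filter Metric Set Topology
open scoped ENNReal

noncomputable section

abbrev Euc (N : ℕ) := EuclideanSpace ℝ (Fin N)

def setDist {E : Type*} [PseudoMetricSpace E] (A B : Set E) : ℝ :=
  sInf ((fun p : E × E => dist p.1 p.2) '' (A ×ˢ B))

def IsH1loc {N : ℕ} (q q' : ℝ → Euc N) : Prop :=
  LocallyIntegrable q' volume ∧
  (∀ a b : ℝ, IntegrableOn (fun t => ‖q' t‖ ^ 2) (Icc a b) volume) ∧
  (∀ a b : ℝ, q b - q a = ∫ t in a..b, q' t)

def lagJ {N : ℕ} (V : Euc N → ℝ) (c : ℝ) (q q' : ℝ → Euc N) (I : Set ℝ) : ℝ≥0∞ :=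
  ∫⁻ t in I, ENNReal.ofReal (2⁻¹ * ‖q' t‖ ^ 2 + (V (q t) - c))

def Gamma {N : ℕ} (V : Euc N → ℝ) (c : ℝ) (Vm Vp : Set (Euc N)) :
    Set ((ℝ → Euc N) × (ℝ → Euc N)) :=
  {p | IsH1loc p.1 p.2 ∧ (∀ t, c ≤ V (p.1 t)) ∧
    (∀ ε > 0, ∃ᶠ t in atBot, infDist (p.1 t) Vm < ε) ∧
    (∀ ε > 0, ∃ᶠ t in atTop, infDist (p.1 t) Vp < ε)}

def mc {N : ℕ} (V : Euc N → ℝ) (c : ℝ) (Vm Vp : Set (Euc N)) : ℝ≥0∞ :=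
  ⨅ (p) (_ : p ∈ Gamma V c Vm Vp), lagJ V c p.1 p.2 univ

def Coercive {N : ℕ} (V : Euc N → ℝ) (c : ℝ) (Vm Vp : Set (Euc N)) (R : ℝ) : Prop :=
  mc V c Vm Vp =
    ⨅ (p) (_ : p ∈ Gamma V c Vm Vp) (_ : ∀ t, ‖p.1 t‖ ≤ R), lagJ V c p.1 p.2 univ

/-- `ρ₀ := (1/4)·dist(𝒱⁻ ∩ B̄_R(0), 𝒱⁺ ∩ B̄_R(0))`. -/
def rho0 {N : ℕ} (Vm Vp : Set (Euc N)) (R : ℝ) : ℝ :=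
  (1 / 4) * setDist (Vm ∩ closedBall 0 R) (Vp ∩ closedBall 0 R)

/-- membership in `ℳ_c`. -/
def MemM {N : ℕ} (V : Euc N → ℝ) (c : ℝ) (Vm Vp : Set (Euc N)) (R : ℝ)
    (q q' : ℝ → Euc N) : Prop :=
  (q, q') ∈ Gamma V c Vm Vp ∧
  infDist (q 0) {x | V x ≤ c} = rho0 Vm Vp R ∧
  lagJ V c q q' univ = mc V c Vm Vp ∧
  (∀ t, ‖q t‖ ≤ R)

/-- `α_q` (valued in `[-∞,+∞]`, with `−∞` when `q(ℝ) ∩ 𝒱⁻ = ∅`). -/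
def alphaQ {N : ℕ} (Vm : Set (Euc N)) (q : ℝ → Euc N) : EReal :=
  sSup {x : EReal | ∃ t : ℝ, x = (t : EReal) ∧ q t ∈ Vm}

/-- `ω_q` (valued in `[-∞,+∞]`, with `+∞` when there is no `t > α_q` with `q(t) ∈ 𝒱⁺`). -/
def omegaQ {N : ℕ} (Vm Vp : Set (Euc N)) (q : ℝ → Euc N) : EReal :=
  sInf {x : EReal | ∃ t : ℝ, x = (t : EReal) ∧ alphaQ Vm q < (t : EReal) ∧ q t ∈ Vp}

/-- reflection of `q` with respect to `b` (used for `t > b`). -/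
def reflPlus {N : ℕ} (q : ℝ → Euc N) (b : ℝ) : ℝ → Euc N :=
  fun t => if t ≤ b then q t else q (2 * b - t)

/-- reflection of `q` with respect to `a` (used for `t < a`). -/
def reflMinus {N : ℕ} (q : ℝ → Euc N) (a : ℝ) : ℝ → Euc N :=
  fun t => if a ≤ t then q t else q (2 * a - t)

/-- ω-limit set `Ω_q := ⋂_{t > α_q} closure {q(s) : s ≥ t}`. -/
def omegaLimitSet {N : ℕ} (Vm : Set (Euc N)) (q : ℝ → Euc N) : Set (Euc N) :=
  ⋂ (t : ℝ) (_ : alphaQ Vm q < (t : EReal)), closure (q '' Ici t)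

/-- α-limit set `𝒜_q := ⋂_{t < ω_q} closure {q(s) : s ≤ t}`. -/
def alphaLimitSet {N : ℕ} (Vm Vp : Set (Euc N)) (q : ℝ → Euc N) : Set (Euc N) :=
  ⋂ (t : ℝ) (_ : (t : EReal) < omegaQ Vm Vp q), closure (q '' Iic t)

/-!
An almost minimizer `q` whose energy is within `ν` of `mc` cannot waste action. If `q` is very close
to `Vp` at some time `s`, then cutting `q` at `s` and joining `q s` to `Vp` by a short segment gives
a competitor costing almost nothing after `s`, so `q` itself spends little action after `s`. Leaving
the `ρ`-neighbourhood of `Vp` later on would cost a fixed `κ > 0`, because it forces `q` across a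
shell around `Vp` on which `V` is bounded below by a constant larger than `c`. Hence `q` is trapped
near `Vp` from time `s` on, and by time reversal it is trapped near `Vm` before any time at which it
is very close to `Vm`. Finally `q` cannot stay away from `{V ≤ c}` on a long interval `(0, L)`; when
it comes close, it does so near `Vp`, since backward trapping near `Vm` would contradict the
position of `q 0`.
-/

/-! ### Geometry of the sublevel set -/

section Geometry

variable {E : Type*} [NormedAddCommGroup E] [NormedSpace ℝ E]

/-- Closest points of `A` and `B` within `K` bound such a segment. -/
lemma exists_openSegment_disjoint {A B K : Set E} (hA : IsClosed A) (hB : IsClosed B)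
    (hAB : Disjoint A B) (hK : IsCompact K) (hKc : Convex ℝ K) (hAK : (A ∩ K).Nonempty)
    (hBK : (B ∩ K).Nonempty) :
    ∃ x ∈ A ∩ K, ∃ z ∈ B ∩ K, ∀ p ∈ openSegment ℝ x z, p ∉ A ∧ p ∉ B := by
  obtain ⟨⟨x, z⟩, ⟨hx, hz⟩, hmin⟩ := ((hK.inter_left hA).prod (hK.inter_left hB)).exists_isMinOn
    (hAK.prod hBK) (continuous_dist (α := E)).continuousOn
  have hxz : x ≠ z := hAB.ne_of_mem hx.1 hz.1
  refine ⟨x, hx, z, hz, fun p hp => ?_⟩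
  have hpK : p ∈ K := hKc.openSegment_subset hx.2 hz.2 hp
  have hadd : dist x p + dist p z = dist x z :=
    dist_add_dist_of_mem_segment (openSegment_subset_segment ℝ x z hp)
  refine ⟨fun hpA => ?_, fun hpB => ?_⟩
  · have hle : dist x z ≤ dist p z := hmin (show (p, z) ∈ _ from ⟨⟨hpA, hpK⟩, hz⟩)
    obtain rfl : x = p := dist_le_zero.1 (by linarith)
    exact hxz (left_mem_openSegment_iff.1 hp)
  · have hle : dist x z ≤ dist x p := hmin (show (x, p) ∈ _ from ⟨hx, hpB, hpK⟩)
    obtain rfl : p = z := dist_le_zero.1 (by linarith)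
    exact hxz (right_mem_openSegment_iff.1 hp)

lemma isCompact_segment (x z : E) : IsCompact (segment ℝ x z) := by
  rw [segment_eq_image_lineMap]
  exact isCompact_Icc.image AffineMap.lineMap_continuous

lemma forall_mem_segment_le_of_forall_mem_openSegment {V : E → ℝ} (hV : Continuous V) {c : ℝ}
    {x z : E} (h : ∀ p ∈ openSegment ℝ x z, c ≤ V p) : ∀ p ∈ segment ℝ x z, c ≤ V p := by
  intro p hp
  rw [← closure_openSegment] at hp
  exact closure_minimal h (isClosed_le continuous_const hV) hp

end Geometry

/-- Condition `(V^c)` for nonempty parts, with the positive distance between `𝒱^c₋` and `𝒱^c₊`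
weakened to disjointness. -/
structure IsSublevelSplitting {X : Type*} [TopologicalSpace X] (V : X → ℝ) (c : ℝ)
    (Vm Vp : Set X) : Prop where
  isClosed_left : IsClosed Vm
  isClosed_right : IsClosed Vp
  nonempty_left : Vm.Nonempty
  nonempty_right : Vp.Nonempty
  sublevel_eq : {x | V x ≤ c} = Vm ∪ Vp
  disjoint : Disjoint Vm Vp

namespace IsSublevelSplitting

section Topological

variable {X : Type*} [TopologicalSpace X] {V : X → ℝ} {c : ℝ} {Vm Vp : Set X}

lemma symm (h : IsSublevelSplitting V c Vm Vp) : IsSublevelSplitting V c Vp Vm where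
  isClosed_left := h.isClosed_right
  isClosed_right := h.isClosed_left
  nonempty_left := h.nonempty_right
  nonempty_right := h.nonempty_left
  sublevel_eq := by rw [h.sublevel_eq, union_comm]
  disjoint := h.disjoint.symm

lemma le_iff (h : IsSublevelSplitting V c Vm Vp) {x : X} : V x ≤ c ↔ x ∈ Vm ∨ x ∈ Vp :=
  Set.ext_iff.1 h.sublevel_eq x

end Topological

lemma exists_mem_right_of_infDist_lt {X : Type*} [PseudoMetricSpace X] {V : X → ℝ} {c : ℝ}
    {Vm Vp K : Set X} (h : IsSublevelSplitting V c Vm Vp) (hK : IsCompact K) :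
    ∃ d > 0, ∀ x ∈ K, V x ≤ c → infDist x Vp < d → x ∈ Vp := by
  obtain ⟨d, hd, hdle⟩ := (hK.inter_left h.isClosed_left).exists_forall_le' (a := 0)
    (continuous_infDist_pt Vp).continuousOn fun x hx =>
      (h.isClosed_right.notMem_iff_infDist_pos h.nonempty_right).1
        (h.disjoint.notMem_of_mem_left hx.1)
  exact ⟨d, hd, fun x hxK hxc hxd => (h.le_iff.1 hxc).resolve_left
    fun hxm => (hdle x ⟨hxm, hxK⟩).not_gt hxd⟩

lemma exists_level_on_shell {X : Type*} [PseudoMetricSpace X] {V : X → ℝ} (hV : Continuous V)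
    {c : ℝ} {Vm Vp K : Set X} (h : IsSublevelSplitting V c Vm Vp) (hK : IsCompact K) {ρ : ℝ}
    (hρ : 0 < ρ) :
    ∃ u v : ℝ, 0 < u ∧ u < v ∧ v ≤ ρ ∧
      ∃ c' > c, ∀ x ∈ K, u ≤ infDist x Vp → infDist x Vp ≤ v → c' ≤ V x := by
  obtain ⟨d, hd, hnear⟩ := h.exists_mem_right_of_infDist_lt hK
  have hv : 0 < min ρ (d / 2) := by positivity
  have hvd : min ρ (d / 2) < d := (min_le_right _ _).trans_lt (half_lt_self hd)
  set v := min ρ (d / 2)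
  have hshell : IsCompact (K ∩ (infDist · Vp) ⁻¹' Icc (v / 2) v) :=
    hK.inter_right (isClosed_Icc.preimage (continuous_infDist_pt Vp))
  obtain ⟨c', hc', hle⟩ := hshell.exists_forall_le' (a := c) hV.continuousOn fun x hx => by
    by_contra! hxc
    have hzero := infDist_zero_of_mem (hnear x hx.1 hxc (hx.2.2.trans_lt hvd))
    linarith [hx.2.1]
  exact ⟨v / 2, v, half_pos hv, half_lt_self hv, min_le_left _ _, c', hc',
    fun x hxK hux hxv => hle x ⟨hxK, hux, hxv⟩⟩

lemma exists_segment_between {E : Type*} [NormedAddCommGroup E] [NormedSpace ℝ E] {V : E → ℝ}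
    (hV : Continuous V) {c : ℝ} {Vm Vp : Set E} (h : IsSublevelSplitting V c Vm Vp) :
    ∃ x ∈ Vm, ∃ z ∈ Vp, ∀ p ∈ segment ℝ x z, c ≤ V p := by
  obtain ⟨x₀, hx₀⟩ := h.nonempty_left
  obtain ⟨z₀, hz₀⟩ := h.nonempty_right
  obtain ⟨x, hx, z, hz, havoid⟩ := exists_openSegment_disjoint h.isClosed_left h.isClosed_right
    h.disjoint (isCompact_segment x₀ z₀) (convex_segment x₀ z₀) ⟨x₀, hx₀, left_mem_segment ℝ x₀ z₀⟩
    ⟨z₀, hz₀, right_mem_segment ℝ x₀ z₀⟩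
  refine ⟨x, hx.1, z, hz.1, forall_mem_segment_le_of_forall_mem_openSegment hV fun p hp => ?_⟩
  exact (not_le.1 fun hpc => (h.le_iff.1 hpc).elim (havoid p hp).1 (havoid p hp).2).le

variable {E : Type*} [NormedAddCommGroup E] [NormedSpace ℝ E] [ProperSpace E]
  {V : E → ℝ} {c : ℝ} {Vm Vp : Set E}

lemma exists_short_segment (h : IsSublevelSplitting V c Vm Vp) (hV : Continuous V) (R : ℝ)
    {ε : ℝ} (hε : 0 < ε) :
    ∃ δ > 0, ∀ x : E, ‖x‖ ≤ R → c ≤ V x → infDist x Vp < δ →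
      ∃ z ∈ Vp, ‖z - x‖ ≤ ε ∧ ∀ p ∈ segment ℝ x z, c ≤ V p ∧ V p ≤ c + ε := by
  obtain ⟨d, hd, hnear⟩ := h.exists_mem_right_of_infDist_lt (isCompact_closedBall (0 : E) (R + 1))
  obtain ⟨η, hη, hunif⟩ := Metric.uniformContinuousOn_iff.1
    ((isCompact_closedBall (0 : E) (R + 1)).uniformContinuousOn_of_continuous hV.continuousOn) ε hε
  refine ⟨min (min 1 d) (min η ε), by positivity, fun x hxR hxc hxδ => ?_⟩
  obtain ⟨z, hz, hxz⟩ := h.isClosed_right.exists_infDist_eq_dist h.nonempty_right x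
  simp only [hxz, lt_min_iff] at hxδ
  obtain ⟨⟨hlt1, hltd⟩, hltη, hltε⟩ := hxδ
  have hadd : ∀ p ∈ segment ℝ x z, dist x p + dist p z = dist x z :=
    fun p hp => dist_add_dist_of_mem_segment hp
  have hball : ∀ p ∈ segment ℝ x z, p ∈ closedBall (0 : E) (R + 1) := fun p hp => by
    rw [mem_closedBall, dist_comm]
    have hx0 : dist 0 x ≤ R := by rwa [dist_zero_left]
    linarith [dist_triangle 0 x p, hadd p hp, dist_nonneg (x := p) (y := z)]
  have hbelow : ∀ p ∈ segment ℝ x z, V p ≤ c → p = z := fun p hp hpc => by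
    have hpz : dist p z ≤ dist x z := by linarith [hadd p hp, dist_nonneg (x := x) (y := p)]
    have hpVp : p ∈ Vp :=
      hnear p (hball p hp) hpc ((infDist_le_dist_of_mem hz).trans_lt (hpz.trans_lt hltd))
    have hclosest : dist x z ≤ dist x p := hxz ▸ infDist_le_dist_of_mem hpVp
    exact dist_le_zero.1 (by linarith [hadd p hp])
  have habove : ∀ p ∈ segment ℝ x z, c ≤ V p := by
    rcases eq_or_ne x z with rfl | hne
    · simpa using hxc
    · refine forall_mem_segment_le_of_forall_mem_openSegment hV fun p hp => ?_
      by_contra! hpc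
      obtain rfl := hbelow p (openSegment_subset_segment ℝ x z hp) hpc.le
      exact hne (right_mem_openSegment_iff.1 hp)
  refine ⟨z, hz, by rw [← dist_eq_norm, dist_comm]; exact hltε.le,
    fun p hp => ⟨habove p hp, ?_⟩⟩
  have hclose : dist (V p) (V z) < ε :=
    hunif p (hball p hp) z (hball z (right_mem_segment ℝ x z))
      (by linarith [hadd p hp, dist_nonneg (x := x) (y := p)])
  have hVz : V z ≤ c := h.le_iff.2 (Or.inr hz)
  linarith [(abs_lt.1 hclose).2]

end IsSublevelSplitting

/-! ### Locally absolutely continuous paths -/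

section Paths

variable {N : ℕ}

lemma isH1loc_affine (x w : Euc N) (τ : ℝ) : IsH1loc (fun t => x + (t - τ) • w) fun _ => w := by
  refine ⟨locallyIntegrable_const w, fun a b => integrableOn_const (by simp), fun a b => ?_⟩
  rw [intervalIntegral.integral_const]
  module

lemma isH1loc_const (x : Euc N) : IsH1loc (fun _ => x) fun _ => 0 := by
  simpa using isH1loc_affine x 0 0

end Paths

namespace IsH1loc

variable {N : ℕ} {p p' q q' : ℝ → Euc N}

lemma intervalIntegrable (h : IsH1loc q q') (a b : ℝ) : IntervalIntegrable q' volume a b :=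
  (h.1.integrableOn_isCompact isCompact_uIcc).intervalIntegrable

lemma continuous (h : IsH1loc q q') : Continuous q := by
  have hprim : q = fun b => q 0 + ∫ t in (0 : ℝ)..b, q' t := by
    funext b
    rw [← h.2.2 0 b, add_sub_cancel]
  rw [hprim]
  exact continuous_const.add (intervalIntegral.continuous_primitive h.intervalIntegrable 0)

lemma of_sub_eq_integral (hloc : LocallyIntegrable q' volume)
    (hsq : ∀ a b, IntegrableOn (fun t => ‖q' t‖ ^ 2) (Icc a b) volume) (τ : ℝ)
    (hint : ∀ t, q t - q τ = ∫ s in τ..t, q' s) : IsH1loc q q' := by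
  refine ⟨hloc, hsq, fun a b => ?_⟩
  have hii : ∀ a b, IntervalIntegrable q' volume a b := fun a b =>
    (hloc.integrableOn_isCompact isCompact_uIcc).intervalIntegrable
  rw [← intervalIntegral.integral_interval_sub_left (hii τ b) (hii τ a), ← hint, ← hint,
    sub_sub_sub_cancel_right]

lemma piecewise (hp : IsH1loc p p') (hq : IsH1loc q q') {τ : ℝ} (hpq : p τ = q τ) :
    IsH1loc ((Iic τ).piecewise p q) ((Iic τ).piecewise p' q') := by
  refine of_sub_eq_integral ?_ (fun a b => ?_) τ fun t => ?_
  · rw [← indicator_add_compl_eq_piecewise]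
    exact (hp.1.indicator measurableSet_Iic).add (hq.1.indicator measurableSet_Iic.compl)
  · have hsq : (fun t => ‖(Iic τ).piecewise p' q' t‖ ^ 2) =
        (Iic τ).piecewise (fun t => ‖p' t‖ ^ 2) fun t => ‖q' t‖ ^ 2 :=
      funext fun t => apply_piecewise (Iic τ) p' q' fun _ y => ‖y‖ ^ 2
    rw [hsq]
    exact Integrable.piecewise measurableSet_Iic (hp.2.1 a b).integrableOn (hq.2.1 a b).integrableOn
  · have hτ : (Iic τ).piecewise p q τ = p τ := piecewise_eq_of_mem _ _ _ self_mem_Iic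
    rcases le_or_gt t τ with ht | ht
    · rw [hτ, piecewise_eq_of_mem (Iic τ) _ _ ht, hp.2.2 τ t]
      refine intervalIntegral.integral_congr_ae (ae_of_all _ fun s hs => ?_)
      rw [uIoc_of_ge ht] at hs
      exact (piecewise_eq_of_mem (Iic τ) _ _ hs.2).symm
    · rw [hτ, hpq, piecewise_eq_of_notMem _ _ _ (notMem_Iic.2 ht), hq.2.2 τ t]
      refine intervalIntegral.integral_congr_ae (ae_of_all _ fun s hs => ?_)
      rw [uIoc_of_le ht.le] at hs
      exact (piecewise_eq_of_notMem (Iic τ) _ _ (notMem_Iic.2 hs.1)).symm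

lemma comp_neg (h : IsH1loc q q') : IsH1loc (fun t => q (-t)) fun t => -q' (-t) := by
  have hneg := Measure.measurePreserving_neg (volume : Measure ℝ)
  refine ⟨?_, fun a b => ?_, fun a b => ?_⟩
  · refine LocallyIntegrable.neg (f := fun t => q' (-t)) ?_
    refine (locallyIntegrable_map_homeomorph (Homeomorph.neg ℝ)).1 ?_
    rw [Homeomorph.coe_neg, hneg.map_eq]
    exact h.1
  · have hsq := (hneg.integrableOn_comp_preimage (Homeomorph.neg ℝ).measurableEmbedding).2
      (h.2.1 (-b) (-a))
    simpa [Function.comp_def] using hsq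
  · rw [intervalIntegral.integral_neg, intervalIntegral.integral_comp_neg, h.2.2,
      intervalIntegral.integral_symm]

end IsH1loc

/-! ### The action -/

section Action

variable {N : ℕ} {V : Euc N → ℝ} {c : ℝ} {Vm Vp : Set (Euc N)} {p p' q q' : ℝ → Euc N}

lemma lagJ_mono {I K : Set ℝ} (h : I ⊆ K) : lagJ V c q q' I ≤ lagJ V c q q' K :=
  lintegral_mono_set h

lemma lagJ_union {I K : Set ℝ} (hK : MeasurableSet K) (h : Disjoint I K) :
    lagJ V c q q' (I ∪ K) = lagJ V c q q' I + lagJ V c q q' K :=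
  lintegral_union hK h

lemma lagJ_congr {I : Set ℝ} (hI : MeasurableSet I) (h : EqOn p q I) (h' : EqOn p' q' I) :
    lagJ V c p p' I = lagJ V c q q' I :=
  setLIntegral_congr_fun hI fun t ht => by simp only [h ht, h' ht]

lemma lagJ_comp_neg (I : Set ℝ) :
    lagJ V c (fun t => q (-t)) (fun t => -q' (-t)) I = lagJ V c q q' (-I) := by
  have hneg := (Measure.measurePreserving_neg (volume : Measure ℝ)).setLIntegral_comp_preimage_emb
    (Homeomorph.neg ℝ).measurableEmbedding
    (fun t => ENNReal.ofReal (2⁻¹ * ‖q' t‖ ^ 2 + (V (q t) - c))) (-I)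
  simpa [lagJ] using hneg

lemma ofReal_mul_le_lagJ_Ioo {L μ : ℝ} (hμ : 0 ≤ μ) (h : ∀ t ∈ Ioo 0 L, c + μ ≤ V (q t)) :
    ENNReal.ofReal (μ * L) ≤ lagJ V c q q' (Ioo 0 L) :=
  calc ENNReal.ofReal (μ * L)
      = ∫⁻ _ in Ioo 0 L, ENNReal.ofReal μ := by
        rw [setLIntegral_const, Real.volume_Ioo, sub_zero, ENNReal.ofReal_mul hμ]
    _ ≤ lagJ V c q q' (Ioo 0 L) :=
        setLIntegral_mono' measurableSet_Ioo fun t ht => ENNReal.ofReal_le_ofReal (by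
          nlinarith [sq_nonneg ‖q' t‖, h t ht])

/-- Since `√(2μ) ‖q'‖ ≤ ‖q'‖² / 2 + μ`, action above the level `c + μ` controls length. -/
lemma IsH1loc.ofReal_sqrt_mul_norm_sub_le_lagJ (hq : IsH1loc q q') {a b μ : ℝ} (hμ : 0 ≤ μ)
    (h : ∀ t ∈ uIoo a b, c + μ ≤ V (q t)) :
    ENNReal.ofReal (√(2 * μ) * ‖q b - q a‖) ≤ lagJ V c q q' (uIoo a b) := by
  have hlength : ‖q b - q a‖ₑ ≤ ∫⁻ t in uIoo a b, ‖q' t‖ₑ := by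
    rw [hq.2.2 a b, ← ofReal_norm, intervalIntegral.norm_intervalIntegral_eq, ofReal_norm, uIoo,
      restrict_Ioo_eq_restrict_Ioc]
    exact enorm_integral_le_lintegral_enorm _
  calc ENNReal.ofReal (√(2 * μ) * ‖q b - q a‖)
      = ENNReal.ofReal √(2 * μ) * ‖q b - q a‖ₑ := by
        rw [ENNReal.ofReal_mul (Real.sqrt_nonneg _), ofReal_norm]
    _ ≤ ENNReal.ofReal √(2 * μ) * ∫⁻ t in uIoo a b, ‖q' t‖ₑ := by gcongr
    _ = ∫⁻ t in uIoo a b, ENNReal.ofReal √(2 * μ) * ‖q' t‖ₑ :=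
        (lintegral_const_mul' _ _ ENNReal.ofReal_ne_top).symm
    _ ≤ lagJ V c q q' (uIoo a b) := by
        refine setLIntegral_mono' measurableSet_Ioo fun t ht => ?_
        rw [← ofReal_norm, ← ENNReal.ofReal_mul (Real.sqrt_nonneg _)]
        have hsqrt : √(2 * μ) ^ 2 = 2 * μ := Real.sq_sqrt (by positivity)
        exact ENNReal.ofReal_le_ofReal (by
          nlinarith [h t ht, sq_nonneg (‖q' t‖ - √(2 * μ))])

lemma IsH1loc.ofReal_mul_sub_le_lagJ_of_infDist (hq : IsH1loc q q') {S : Set (Euc N)}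
    {a b u v μ : ℝ} (hμ : 0 ≤ μ) (huv : u < v) (hab : a ≤ b) (ha : infDist (q a) S ≤ u)
    (hb : v ≤ infDist (q b) S)
    (h : ∀ t, u ≤ infDist (q t) S → infDist (q t) S ≤ v → c + μ ≤ V (q t)) :
    ENNReal.ofReal (√(2 * μ) * (v - u)) ≤ lagJ V c q q' (Ioo a b) := by
  have hf : Continuous fun t => infDist (q t) S := (continuous_infDist_pt S).comp hq.continuous
  obtain ⟨s, ⟨hsu, hs⟩, t, ⟨htv, ht⟩, hshell⟩ := exists_openSegment_disjoint
    (isClosed_Iic.preimage hf) (isClosed_Ici.preimage hf)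
    ((Iic_disjoint_Ici.2 huv.not_ge).preimage _) isCompact_Icc (convex_Icc a b)
    ⟨a, ha, left_mem_Icc.2 hab⟩ ⟨b, hb, right_mem_Icc.2 hab⟩
  have hst : s ≠ t := by
    rintro rfl
    exact (hsu.trans_lt huv).not_ge htv
  rw [openSegment_eq_Ioo' hst] at hshell
  have hlip : v - u ≤ ‖q t - q s‖ := by
    rw [← dist_eq_norm]
    have hus : infDist (q s) S ≤ u := hsu
    have hvt : v ≤ infDist (q t) S := htv
    linarith [infDist_le_infDist_add_dist (s := S) (x := q t) (y := q s)]
  calc ENNReal.ofReal (√(2 * μ) * (v - u))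
      ≤ ENNReal.ofReal (√(2 * μ) * ‖q t - q s‖) := by gcongr
    _ ≤ lagJ V c q q' (uIoo s t) := hq.ofReal_sqrt_mul_norm_sub_le_lagJ hμ fun r hr =>
        h r (not_le.1 (hshell r hr).1).le (not_le.1 (hshell r hr).2).le
    _ ≤ lagJ V c q q' (Ioo a b) := lagJ_mono (Ioo_subset_Ioo (le_min hs.1 ht.1) (max_le hs.2 ht.2))

lemma comp_neg_mem_Gamma (h : (q, q') ∈ Gamma V c Vm Vp) :
    (fun t => q (-t), fun t => -q' (-t)) ∈ Gamma V c Vp Vm := by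
  obtain ⟨hq, hVq, hm, hp⟩ := h
  exact ⟨hq.comp_neg, fun t => hVq (-t),
    fun ε hε => tendsto_neg_atTop_atBot.frequently (by simpa using hp ε hε),
    fun ε hε => tendsto_neg_atBot_atTop.frequently (by simpa using hm ε hε)⟩

lemma mc_comm (V : Euc N → ℝ) (c : ℝ) (Vm Vp : Set (Euc N)) : mc V c Vm Vp = mc V c Vp Vm := by
  have hle : ∀ A B : Set (Euc N), mc V c A B ≤ mc V c B A := fun A B =>
    le_iInf₂ fun p hp =>
      (iInf₂_le _ (comp_neg_mem_Gamma hp)).trans_eq (by rw [lagJ_comp_neg, neg_univ])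
  exact le_antisymm (hle _ _) (hle _ _)

/-! ### Gluing paths -/

lemma piecewise_Iic_eqOn_Ioi {α β : Type*} [LinearOrder α] (a : α) (f g : α → β) :
    EqOn ((Iic a).piecewise f g) g (Ioi a) := by
  rw [← compl_Iic]
  exact piecewise_eqOn_compl _ _ _

lemma mc_le_lagJ_Iic_add_lagJ_Ioi (hp : IsH1loc p p') (hq : IsH1loc q q') {τ : ℝ}
    (hpq : p τ = q τ) (hVp : ∀ t ≤ τ, c ≤ V (p t)) (hVq : ∀ t > τ, c ≤ V (q t))
    (hpm : ∀ ε > 0, ∃ᶠ t in atBot, infDist (p t) Vm < ε)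
    (hqp : ∀ ε > 0, ∃ᶠ t in atTop, infDist (q t) Vp < ε) :
    mc V c Vm Vp ≤ lagJ V c p p' (Iic τ) + lagJ V c q q' (Ioi τ) := by
  have hleft (f g : ℝ → Euc N) := piecewise_eqOn (Iic τ) f g
  have hright (f g : ℝ → Euc N) := piecewise_Iic_eqOn_Ioi τ f g
  have hmem : ((Iic τ).piecewise p q, (Iic τ).piecewise p' q') ∈ Gamma V c Vm Vp := by
    refine ⟨hp.piecewise hq hpq, fun t => ?_, fun ε hε => ?_, fun ε hε => ?_⟩
    · rcases le_or_gt t τ with ht | ht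
      · simpa only [hleft p q ht] using hVp t ht
      · simpa only [hright p q ht] using hVq t ht
    · exact ((hpm ε hε).and_eventually (eventually_le_atBot τ)).mono fun t ht => by
        simpa only [hleft p q ht.2] using ht.1
    · exact ((hqp ε hε).and_eventually (eventually_gt_atTop τ)).mono fun t ht => by
        simpa only [hright p q ht.2] using ht.1
  refine (iInf₂_le _ hmem).trans_eq ?_
  rw [← Iic_union_Ioi (a := τ), lagJ_union measurableSet_Ioi (Iic_disjoint_Ioi le_rfl),
    lagJ_congr measurableSet_Iic (hleft p q) (hleft p' q'),
    lagJ_congr measurableSet_Ioi (hright p q) (hright p' q')]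

lemma exists_isH1loc_segment {x z : Euc N} (hz : V z ≤ c) {C : ℝ}
    (hseg : ∀ y ∈ segment ℝ x z, c ≤ V y ∧ V y ≤ c + C) (τ : ℝ) :
    ∃ q q' : ℝ → Euc N, IsH1loc q q' ∧ q τ = x ∧ (∀ t > τ, c ≤ V (q t)) ∧
      (∀ t > τ + 1, q t = z) ∧
      lagJ V c q q' (Ioi τ) ≤ ENNReal.ofReal (2⁻¹ * ‖z - x‖ ^ 2 + C) := by
  -- Run along the segment during `[τ, τ + 1]`, then rest at `z`.
  set line : ℝ → Euc N := fun t => x + (t - τ) • (z - x)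
  have hline : ∀ t ∈ Ioc τ (τ + 1), line t ∈ segment ℝ x z := fun t ht => by
    rw [segment_eq_image']
    exact ⟨t - τ, ⟨by linarith [ht.1], by linarith [ht.2]⟩, rfl⟩
  have hleft (f g : ℝ → Euc N) : EqOn ((Iic (τ + 1)).piecewise f g) f (Ioc τ (τ + 1)) :=
    (piecewise_eqOn _ _ _).mono Ioc_subset_Iic_self
  have hright (f g : ℝ → Euc N) := piecewise_Iic_eqOn_Ioi (τ + 1) f g
  refine ⟨(Iic (τ + 1)).piecewise line fun _ => z, (Iic (τ + 1)).piecewise (fun _ => z - x) 0,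
    (isH1loc_affine x (z - x) τ).piecewise (isH1loc_const z) (by simp),
    by simp [line], fun t ht => ?_, fun t ht => hright line _ ht, ?_⟩
  · rcases le_or_gt t (τ + 1) with ht' | ht'
    · rw [hleft line _ ⟨ht, ht'⟩]
      exact (hseg _ (hline t ⟨ht, ht'⟩)).1
    · rw [hright line _ ht']
      exact (hseg z (right_mem_segment ℝ x z)).1
  · have hrest : lagJ V c (fun _ => z) 0 (Ioi (τ + 1)) = 0 := by simp [lagJ, hz]
    rw [← Ioc_union_Ioi_eq_Ioi (le_add_of_nonneg_right zero_le_one),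
      lagJ_union measurableSet_Ioi (Ioc_disjoint_Ioi le_rfl),
      lagJ_congr measurableSet_Ioc (hleft line _) (hleft _ _),
      lagJ_congr measurableSet_Ioi (hright line _) (hright _ _), hrest, add_zero]
    calc lagJ V c line (fun _ => z - x) (Ioc τ (τ + 1))
        ≤ ∫⁻ _ in Ioc τ (τ + 1), ENNReal.ofReal (2⁻¹ * ‖z - x‖ ^ 2 + C) :=
          setLIntegral_mono' measurableSet_Ioc fun t ht => ENNReal.ofReal_le_ofReal (by
            linarith [(hseg _ (hline t ht)).2])
      _ = ENNReal.ofReal (2⁻¹ * ‖z - x‖ ^ 2 + C) := by simp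

lemma mc_le_lagJ_Iic_add_ofReal (hp : IsH1loc p p') {τ : ℝ} (hVp : ∀ t ≤ τ, c ≤ V (p t))
    (hpm : ∀ ε > 0, ∃ᶠ t in atBot, infDist (p t) Vm < ε) {z : Euc N} (hz : z ∈ Vp)
    (hVz : V z ≤ c) {C : ℝ} (hseg : ∀ y ∈ segment ℝ (p τ) z, c ≤ V y ∧ V y ≤ c + C) :
    mc V c Vm Vp ≤ lagJ V c p p' (Iic τ) + ENNReal.ofReal (2⁻¹ * ‖z - p τ‖ ^ 2 + C) := by
  obtain ⟨q, q', hq, hqτ, hVq, hrest, hcost⟩ := exists_isH1loc_segment hVz hseg τ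
  refine (mc_le_lagJ_Iic_add_lagJ_Ioi hp hq hqτ.symm hVp hVq hpm fun ε hε => ?_).trans
    (add_le_add_right hcost _)
  refine Eventually.frequently ((eventually_gt_atTop (τ + 1)).mono fun t ht => ?_)
  rwa [hrest t ht, infDist_zero_of_mem hz]

lemma IsSublevelSplitting.mc_ne_top (h : IsSublevelSplitting V c Vm Vp) (hV : Continuous V) :
    mc V c Vm Vp ≠ ∞ := by
  obtain ⟨x, hx, z, hz, hseg⟩ := h.exists_segment_between hV
  obtain ⟨B, hB⟩ := (isCompact_segment x z).bddAbove_image hV.continuousOn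
  have hglue := mc_le_lagJ_Iic_add_ofReal (Vm := Vm) (isH1loc_const x) (τ := 0)
    (fun _ _ => hseg x (left_mem_segment ℝ x z))
    (fun ε hε => Frequently.of_forall fun _ => by rwa [infDist_zero_of_mem hx]) hz
    (h.le_iff.2 (Or.inr hz)) (C := B - c)
    fun y hy => ⟨hseg y hy, by linarith [hB (mem_image_of_mem V hy)]⟩
  have hrest : lagJ V c (fun _ => x) (fun _ => 0) (Iic 0) = 0 := by
    simp [lagJ, h.le_iff.2 (Or.inl hx)]
  rw [hrest, zero_add] at hglue
  exact ne_top_of_le_ne_top ENNReal.ofReal_ne_top hglue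

end Action

/-! ### Trapping of almost minimizers -/

/-- `q`, with derivative `q'`, is admissible, bounded by `R`, and its action exceeds the infimum
`m_c` by at most `ν`. -/
structure IsAlmostMinimizer {N : ℕ} (V : Euc N → ℝ) (c : ℝ) (Vm Vp : Set (Euc N)) (R ν : ℝ)
    (q q' : ℝ → Euc N) : Prop where
  mem_Gamma : (q, q') ∈ Gamma V c Vm Vp
  norm_le : ∀ t, ‖q t‖ ≤ R
  lagJ_le : lagJ V c q q' univ ≤ mc V c Vm Vp + ENNReal.ofReal ν

namespace IsAlmostMinimizer

variable {N : ℕ} {V : Euc N → ℝ} {c : ℝ} {Vm Vp : Set (Euc N)} {R ν : ℝ} {q q' : ℝ → Euc N}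

lemma mono (h : IsAlmostMinimizer V c Vm Vp R ν q q') {ν' : ℝ} (hν : ν ≤ ν') :
    IsAlmostMinimizer V c Vm Vp R ν' q q' where
  mem_Gamma := h.mem_Gamma
  norm_le := h.norm_le
  lagJ_le := h.lagJ_le.trans (by gcongr)

lemma comp_neg (h : IsAlmostMinimizer V c Vm Vp R ν q q') :
    IsAlmostMinimizer V c Vp Vm R ν (fun t => q (-t)) fun t => -q' (-t) where
  mem_Gamma := comp_neg_mem_Gamma h.mem_Gamma
  norm_le t := h.norm_le (-t)
  lagJ_le := by
    rw [lagJ_comp_neg, neg_univ, mc_comm]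
    exact h.lagJ_le

lemma lagJ_Ioi_le (h : IsAlmostMinimizer V c Vm Vp R ν q q') (hmc : mc V c Vm Vp ≠ ∞) {s : ℝ}
    {a : ℝ≥0∞} (hglue : mc V c Vm Vp ≤ lagJ V c q q' (Iic s) + a) :
    lagJ V c q q' (Ioi s) ≤ ENNReal.ofReal ν + a := by
  refine (ENNReal.add_le_add_iff_left hmc).1 ?_
  calc mc V c Vm Vp + lagJ V c q q' (Ioi s)
      ≤ lagJ V c q q' (Iic s) + a + lagJ V c q q' (Ioi s) := by gcongr
    _ = lagJ V c q q' univ + a := by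
        rw [← Iic_union_Ioi (a := s), lagJ_union measurableSet_Ioi (Iic_disjoint_Ioi le_rfl),
          add_right_comm]
    _ ≤ mc V c Vm Vp + ENNReal.ofReal ν + a := by gcongr; exact h.lagJ_le
    _ = mc V c Vm Vp + (ENNReal.ofReal ν + a) := add_assoc _ _ _

end IsAlmostMinimizer

section Trapping

variable {N : ℕ} {V : Euc N → ℝ} {c : ℝ} {Vm Vp : Set (Euc N)} {ρ : ℝ}

lemma exists_infDist_sublevel_lt (hV : Continuous V) (c R : ℝ) {M : ℝ≥0∞} (hM : M ≠ ∞) {r : ℝ}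
    (hr : 0 < r) :
    ∃ L > 0, ∀ q q' : ℝ → Euc N, (∀ t, ‖q t‖ ≤ R) → lagJ V c q q' univ ≤ M →
      ∃ τ ∈ Ioo 0 L, infDist (q τ) {x | V x ≤ c} < r := by
  have hfar : IsCompact (closedBall (0 : Euc N) R ∩ (infDist · {x | V x ≤ c}) ⁻¹' Ici r) :=
    (isCompact_closedBall 0 R).inter_right (isClosed_Ici.preimage (continuous_infDist_pt _))
  obtain ⟨c', hc', hle⟩ := hfar.exists_forall_le' (a := c) hV.continuousOn fun x hx => by
    by_contra! hxc
    have hzero : infDist x {x | V x ≤ c} = 0 := infDist_zero_of_mem hxc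
    have hxr : r ≤ infDist x {x | V x ≤ c} := hx.2
    linarith
  have hμ : 0 < c' - c := sub_pos.2 hc'
  refine ⟨(M.toReal + 1) / (c' - c), by positivity, fun q q' hqR hJ => ?_⟩
  by_contra! hstay
  have hcost := ofReal_mul_le_lagJ_Ioo (c := c) (q' := q') hμ.le fun t ht =>
    (add_sub_cancel c c').trans_le (hle (q t) ⟨mem_closedBall_zero_iff.2 (hqR t), hstay t ht⟩)
  rw [mul_div_cancel₀ _ hμ.ne'] at hcost
  have hMlt : M < ENNReal.ofReal (M.toReal + 1) :=
    (ENNReal.lt_ofReal_iff_toReal_lt hM).2 (lt_add_one _)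
  exact (hcost.trans ((lagJ_mono (subset_univ _)).trans hJ)).not_gt hMlt

namespace IsSublevelSplitting

lemma exists_escape_cost (h : IsSublevelSplitting V c Vm Vp) (hV : Continuous V) (R : ℝ)
    (hρ : 0 < ρ) :
    ∃ u > 0, ∃ κ > 0, ∀ q q' : ℝ → Euc N, IsH1loc q q' → (∀ t, ‖q t‖ ≤ R) →
      ∀ a b, a ≤ b → infDist (q a) Vp ≤ u → ρ ≤ infDist (q b) Vp →
        ENNReal.ofReal κ ≤ lagJ V c q q' (Ioo a b) := by
  obtain ⟨u, v, hu, huv, hvρ, c', hc', hshell⟩ :=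
    h.exists_level_on_shell hV (isCompact_closedBall 0 R) hρ
  have hμ : 0 < c' - c := sub_pos.2 hc'
  refine ⟨u, hu, √(2 * (c' - c)) * (v - u), mul_pos (by positivity) (sub_pos.2 huv),
    fun q q' hq hqR a b hab ha hb => ?_⟩
  refine hq.ofReal_mul_sub_le_lagJ_of_infDist hμ.le huv hab ha (hvρ.trans hb) fun t hut htv => ?_
  rw [add_sub_cancel]
  exact hshell (q t) (mem_closedBall_zero_iff.2 (hqR t)) hut htv

lemma exists_forward_trapping (h : IsSublevelSplitting V c Vm Vp) (hV : Continuous V) (R : ℝ)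
    (hρ : 0 < ρ) :
    ∃ δ > 0, ∃ ν > 0, ∀ q q' : ℝ → Euc N, IsAlmostMinimizer V c Vm Vp R ν q q' →
      ∀ s t, s ≤ t → infDist (q s) Vp < δ → infDist (q t) Vp < ρ := by
  obtain ⟨u, hu, κ, hκ, hescape⟩ := h.exists_escape_cost hV R hρ
  obtain ⟨ε, hε, hε1, hεκ⟩ : ∃ ε : ℝ, 0 < ε ∧ ε ≤ 1 ∧ ε ≤ κ / 4 :=
    ⟨min 1 (κ / 4), by positivity, min_le_left _ _, min_le_right _ _⟩
  obtain ⟨δ, hδ, hshort⟩ := h.exists_short_segment hV R hε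
  refine ⟨min u δ, by positivity, κ / 2, by positivity, fun q q' hmin s t hst hs => ?_⟩
  obtain ⟨hq, hVq, hqm, -⟩ := hmin.mem_Gamma
  by_contra! ht
  obtain ⟨z, hz, hzq, hseg⟩ :=
    hshort (q s) (hmin.norm_le s) (hVq s) (hs.trans_le (min_le_right _ _))
  have hafter := hmin.lagJ_Ioi_le (h.mc_ne_top hV)
    (mc_le_lagJ_Iic_add_ofReal hq (fun t _ => hVq t) hqm hz (h.le_iff.2 (Or.inr hz)) hseg)
  have hcost := (hescape q q' hq hmin.norm_le s t hst (hs.le.trans (min_le_left _ _)) ht).trans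
    ((lagJ_mono Ioo_subset_Ioi_self).trans hafter)
  rw [← ENNReal.ofReal_add (by positivity) (by positivity),
    ENNReal.ofReal_le_ofReal_iff (by positivity)] at hcost
  nlinarith [norm_nonneg (z - q s)]

lemma exists_backward_trapping (h : IsSublevelSplitting V c Vm Vp) (hV : Continuous V) (R : ℝ)
    (hρ : 0 < ρ) :
    ∃ δ > 0, ∃ ν > 0, ∀ q q' : ℝ → Euc N, IsAlmostMinimizer V c Vm Vp R ν q q' →
      ∀ s t, t ≤ s → infDist (q s) Vm < δ → infDist (q t) Vm < ρ := by
  obtain ⟨δ, hδ, ν, hν, htrap⟩ := h.symm.exists_forward_trapping hV R hρ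
  refine ⟨δ, hδ, ν, hν, fun q q' hmin s t hts hs => ?_⟩
  simpa using htrap _ _ hmin.comp_neg (-s) (-t) (neg_le_neg hts) (by simpa using hs)

lemma infDist_lt_left_or_right (h : IsSublevelSplitting V c Vm Vp) {x : Euc N} {r : ℝ}
    (hx : infDist x {x | V x ≤ c} < r) : infDist x Vm < r ∨ infDist x Vp < r := by
  rw [h.sublevel_eq, infDist_lt_iff (h.nonempty_left.mono subset_union_left)] at hx
  obtain ⟨y, hy | hy, hxy⟩ := hx
  · exact Or.inl ((infDist_le_dist_of_mem hy).trans_lt hxy)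
  · exact Or.inr ((infDist_le_dist_of_mem hy).trans_lt hxy)

lemma infDist_sublevel_le_left (h : IsSublevelSplitting V c Vm Vp) (x : Euc N) :
    infDist x {x | V x ≤ c} ≤ infDist x Vm :=
  infDist_le_infDist_of_subset (h.sublevel_eq ▸ subset_union_left) h.nonempty_left

lemma exists_forward_concentration (h : IsSublevelSplitting V c Vm Vp) (hV : Continuous V) (R : ℝ)
    (hρ : 0 < ρ) :
    ∃ rbar > 0, ∃ ν > 0, ∀ r, 0 < r → r < rbar → ∃ L > 0, ∀ q q' : ℝ → Euc N,
      IsAlmostMinimizer V c Vm Vp R ν q q' → ρ ≤ infDist (q 0) {x | V x ≤ c} →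
        ∃ τ ∈ Ioo 0 L, infDist (q τ) Vp ≤ r ∧ ∀ t, τ ≤ t → infDist (q t) Vp < ρ := by
  obtain ⟨δp, hδp, νp, hνp, hforward⟩ := h.exists_forward_trapping hV R hρ
  obtain ⟨δm, hδm, νm, hνm, hbackward⟩ := h.exists_backward_trapping hV R hρ
  refine ⟨min δp δm, by positivity, min νp νm, by positivity, fun r hr hrδ => ?_⟩
  obtain ⟨hrp, hrm⟩ := lt_min_iff.1 hrδ
  obtain ⟨L, hL, hhit⟩ := exists_infDist_sublevel_lt hV c R
    (ENNReal.add_ne_top.2 ⟨h.mc_ne_top hV, ENNReal.ofReal_ne_top (r := min νp νm)⟩) hr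
  refine ⟨L, hL, fun q q' hmin h0 => ?_⟩
  obtain ⟨τ, hτ, hτr⟩ := hhit q q' hmin.norm_le hmin.lagJ_le
  rcases h.infDist_lt_left_or_right hτr with hm | hp
  · have hback : infDist (q 0) Vm < ρ :=
      hbackward q q' (hmin.mono (min_le_right _ _)) τ 0 hτ.1.le (hm.trans hrm)
    exact absurd (h0.trans (h.infDist_sublevel_le_left (q 0))) hback.not_ge
  · exact ⟨τ, hτ, hp.le, fun t ht =>
      hforward q q' (hmin.mono (min_le_left _ _)) τ t ht (hp.trans hrp)⟩

lemma exists_backward_concentration (h : IsSublevelSplitting V c Vm Vp) (hV : Continuous V) (R : ℝ)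
    (hρ : 0 < ρ) :
    ∃ rbar > 0, ∃ ν > 0, ∀ r, 0 < r → r < rbar → ∃ L > 0, ∀ q q' : ℝ → Euc N,
      IsAlmostMinimizer V c Vm Vp R ν q q' → ρ ≤ infDist (q 0) {x | V x ≤ c} →
        ∃ σ ∈ Ioo (-L) 0, infDist (q σ) Vm ≤ r ∧ ∀ t, t ≤ σ → infDist (q t) Vm < ρ := by
  obtain ⟨rbar, hrbar, ν, hν, hconc⟩ := h.symm.exists_forward_concentration hV R hρ
  refine ⟨rbar, hrbar, ν, hν, fun r hr hrr => ?_⟩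
  obtain ⟨L, hL, hconc⟩ := hconc r hr hrr
  refine ⟨L, hL, fun q q' hmin h0 => ?_⟩
  obtain ⟨τ, hτ, hτr, htrap⟩ := hconc _ _ hmin.comp_neg (by simpa using h0)
  exact ⟨-τ, ⟨neg_lt_neg hτ.2, neg_neg_iff_pos.2 hτ.1⟩, hτr, fun t ht => by
    simpa using htrap (-t) (le_neg_of_le_neg ht)⟩

end IsSublevelSplitting

end Trapping

/-! ### Separation and coercivity -/

section Separation

lemma setDist_le_dist {E : Type*} [PseudoMetricSpace E] {A B : Set E} {x y : E} (hx : x ∈ A)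
    (hy : y ∈ B) : setDist A B ≤ dist x y :=
  csInf_le ⟨0, forall_mem_image.2 fun _ _ => dist_nonneg⟩ ⟨(x, y), ⟨hx, hy⟩, rfl⟩

lemma setDist_anti {E : Type*} [PseudoMetricSpace E] {A A' B B' : Set E} (hA : A' ⊆ A)
    (hB : B' ⊆ B) (hA' : A'.Nonempty) (hB' : B'.Nonempty) : setDist A B ≤ setDist A' B' :=
  le_csInf ((hA'.prod hB').image _)
    (forall_mem_image.2 fun _ hp => setDist_le_dist (hA hp.1) (hB hp.2))

lemma nonempty_prod_of_setDist_pos {E : Type*} [PseudoMetricSpace E] {A B : Set E}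
    (h : 0 < setDist A B) : (A ×ˢ B).Nonempty := by
  by_contra hempty
  rw [setDist, not_nonempty_iff_eq_empty.1 hempty, image_empty, Real.sInf_empty] at h
  exact h.false

lemma isSublevelSplitting_of_setDist_pos {E : Type*} [PseudoMetricSpace E] {V : E → ℝ} {c : ℝ}
    {Vm Vp : Set E} (hVm : IsClosed Vm) (hVp : IsClosed Vp) (hsplit : {x | V x ≤ c} = Vm ∪ Vp)
    (hsep : 0 < setDist Vm Vp) : IsSublevelSplitting V c Vm Vp where
  isClosed_left := hVm
  isClosed_right := hVp
  nonempty_left := (nonempty_prod_of_setDist_pos hsep).fst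
  nonempty_right := (nonempty_prod_of_setDist_pos hsep).snd
  sublevel_eq := hsplit
  disjoint := Set.disjoint_left.2 fun x hxm hxp =>
    hsep.not_ge ((setDist_le_dist hxm hxp).trans_eq (dist_self x))

lemma inter_nonempty_of_forall_exists_infDist_lt {X : Type*} [PseudoMetricSpace X] {S K : Set X}
    (hS : IsClosed S) (hne : S.Nonempty) (hK : IsCompact K)
    (h : ∀ ε > 0, ∃ x ∈ K, infDist x S < ε) : (S ∩ K).Nonempty := by
  by_contra hempty
  obtain ⟨ε, hε, hle⟩ := hK.exists_forall_le' (a := 0) (continuous_infDist_pt S).continuousOn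
    fun x hx => (hS.notMem_iff_infDist_pos hne).1 fun hxS => hempty ⟨x, hxS, hx⟩
  obtain ⟨x, hx, hlt⟩ := h ε hε
  exact (hle x hx).not_gt hlt

variable {N : ℕ} {V : Euc N → ℝ} {c : ℝ} {Vm Vp : Set (Euc N)} {R : ℝ}

lemma Coercive.exists_mem_Gamma (hcoer : Coercive V c Vm Vp R) (hmc : mc V c Vm Vp ≠ ∞) :
    ∃ p ∈ Gamma V c Vm Vp, ∀ t, ‖p.1 t‖ ≤ R := by
  by_contra! hnone
  refine hmc (hcoer.trans ?_)
  simp only [iInf_eq_top]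
  intro p hp hpR
  obtain ⟨t, ht⟩ := hnone p hp
  exact absurd (hpR t) ht.not_ge

lemma Coercive.rho0_pos (hcoer : Coercive V c Vm Vp R) (h : IsSublevelSplitting V c Vm Vp)
    (hV : Continuous V) (hsep : 0 < setDist Vm Vp) : 0 < rho0 Vm Vp R := by
  obtain ⟨p, ⟨-, -, hpm, hpp⟩, hpR⟩ := hcoer.exists_mem_Gamma (h.mc_ne_top hV)
  have hball (t : ℝ) : p.1 t ∈ closedBall 0 R := mem_closedBall_zero_iff.2 (hpR t)
  have hm : (Vm ∩ closedBall 0 R).Nonempty := inter_nonempty_of_forall_exists_infDist_lt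
    h.isClosed_left h.nonempty_left (isCompact_closedBall 0 R) fun ε hε =>
      let ⟨t, ht⟩ := (hpm ε hε).exists
      ⟨p.1 t, hball t, ht⟩
  have hp : (Vp ∩ closedBall 0 R).Nonempty := inter_nonempty_of_forall_exists_infDist_lt
    h.isClosed_right h.nonempty_right (isCompact_closedBall 0 R) fun ε hε =>
      let ⟨t, ht⟩ := (hpp ε hε).exists
      ⟨p.1 t, hball t, ht⟩
  exact mul_pos (by norm_num)
    (hsep.trans_le (setDist_anti inter_subset_left inter_subset_left hm hp))

end Separation

theorem concentration_general {N : ℕ} {V : Euc N → ℝ} (hV : Continuous V) {c : ℝ}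
    {Vm Vp : Set (Euc N)} (h : IsSublevelSplitting V c Vm Vp) (R : ℝ) {ρ : ℝ} (hρ : 0 < ρ) :
    ∃ rbar : ℝ, 0 < rbar ∧ rbar < ρ / 2 ∧
      ∀ r : ℝ, 0 < r → r < rbar →
        ∃ L > (0 : ℝ), ∃ ν > (0 : ℝ),
          ∀ q q' : ℝ → Euc N, (q, q') ∈ Gamma V c Vm Vp →
            ρ ≤ infDist (q 0) {x | V x ≤ c} →
            (∀ t, ‖q t‖ ≤ R) →
            lagJ V c q q' univ ≤ mc V c Vm Vp + ENNReal.ofReal ν →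
            ((∃ τ ∈ Ioo (0 : ℝ) L, infDist (q τ) Vp ≤ r ∧
                ∀ t, τ ≤ t → infDist (q t) Vp < ρ) ∧
             (∃ σ ∈ Ioo (-L) (0 : ℝ), infDist (q σ) Vm ≤ r ∧
                ∀ t, t ≤ σ → infDist (q t) Vm < ρ)) := by
  obtain ⟨rp, hrp, νp, hνp, hforward⟩ := h.exists_forward_concentration hV R hρ
  obtain ⟨rm, hrm, νm, hνm, hbackward⟩ := h.exists_backward_concentration hV R hρ
  refine ⟨min (ρ / 4) (min rp rm), by positivity,
    (min_le_left _ _).trans_lt (by linarith), fun r hr hrr => ?_⟩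
  obtain ⟨-, hrrp, hrrm⟩ := by simpa only [lt_min_iff] using hrr
  obtain ⟨Lp, hLp, hforward⟩ := hforward r hr hrrp
  obtain ⟨Lm, -, hbackward⟩ := hbackward r hr hrrm
  refine ⟨max Lp Lm, lt_max_of_lt_left hLp, min νp νm, by positivity,
    fun q q' hq h0 hqR hJ => ?_⟩
  have hmin : IsAlmostMinimizer V c Vm Vp R (min νp νm) q q' := ⟨hq, hqR, hJ⟩
  obtain ⟨τ, hτ, hτp⟩ := hforward q q' (hmin.mono (min_le_left _ _)) h0
  obtain ⟨σ, hσ, hσm⟩ := hbackward q q' (hmin.mono (min_le_right _ _)) h0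
  exact ⟨⟨τ, Ioo_subset_Ioo_right (le_max_left _ _) hτ, hτp⟩,
    ⟨σ, Ioo_subset_Ioo_left (neg_le_neg (le_max_right _ _)) hσ, hσm⟩⟩

/-- Lemma 2.3 (concentration): low-action admissible trajectories concentrate near the
sublevel sets, with quantitative estimates. -/
theorem concentration {N : ℕ} (hN : 0 < N) (V : Euc N → ℝ) (hV : ContDiff ℝ 1 V)
    (c : ℝ) (Vm Vp : Set (Euc N)) (hVm : IsClosed Vm) (hVp : IsClosed Vp)
    (hsplit : {x | V x ≤ c} = Vm ∪ Vp) (hsep : 0 < setDist Vm Vp)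
    (R : ℝ) (hR : 0 < R) (hcoer : Coercive V c Vm Vp R) :
    ∃ rbar : ℝ, 0 < rbar ∧ rbar < rho0 Vm Vp R / 2 ∧
      ∀ r : ℝ, 0 < r → r < rbar →
        ∃ L > (0 : ℝ), ∃ ν > (0 : ℝ),
          ∀ q q' : ℝ → Euc N, (q, q') ∈ Gamma V c Vm Vp →
            rho0 Vm Vp R ≤ infDist (q 0) {x | V x ≤ c} →
            (∀ t, ‖q t‖ ≤ R) →
            lagJ V c q q' univ ≤ mc V c Vm Vp + ENNReal.ofReal ν →
            ((∃ τ ∈ Ioo (0 : ℝ) L, infDist (q τ) Vp ≤ r ∧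
                ∀ t, τ ≤ t → infDist (q t) Vp < rho0 Vm Vp R) ∧
             (∃ σ ∈ Ioo (-L) (0 : ℝ), infDist (q σ) Vm ≤ r ∧
                ∀ t, t ≤ σ → infDist (q t) Vm < rho0 Vm Vp R)) := by
  have h := isSublevelSplitting_of_setDist_pos hVm hVp hsplit hsep
  exact concentration_general hV.continuous h R (hcoer.rho0_pos h hV.continuous hsep)
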